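/- arXiv:1507.06714 — 2 statements merged into one kernel-verified Lean document; each statement's English description precedes it below -/
import Mathlib

section
/- Let R be a commutative ring and M a finitely generated R-module. The k-th Fitting ideal of M, defined from a free finite presentation R^n → R^m → M → 0 as the ideal generated by the (m-k+1)×(m-k+1) minors of the presentation matrix, depends only on M and k, and not on the choice of presentation. -/
/-!
Two presentations `π₁ : R^{m₁} → M`, `π₂ : R^{m₂} → M` are compared through the combined surjection
`(π₁, π₂) : R^{m₁} ⊕ R^{m₂} → M`. Choose lifts `Q` of `π₁` through `π₂` and `P` of `π₂` through
`π₁`. The kernel of `(π₁, π₂)` is the column space of each of the block matrices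
`E₁ = [d₁, -P; 0, 1]` and `E₂ = [1, 0; -Q, d₂]`. Only the factorization `E₁ = E₂ * B` is needed,
and it yields, with `c = k - 1` and `t = m₁ + m₂ - c`,

`I_{m₁ - c}(d₁) ≤ I_t(E₁) ≤ I_t(E₂) ≤ I_{m₂ - c}(d₂)`.

The first inequality borders a minor of `d₁` by the identity block, the second is the multilinearity
of the determinant (`minorsIdeal_mul_le`), and the third is Laplace expansion along the columns
through the identity block of `E₂` (`det_mem_of_bad_columns`). The reverse inequality holds by
symmetry. Truncated subtraction agrees with the conventions on `k`, since `I_0 = R`.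
-/

open Matrix

/-- The ideal generated by the `r × r` minors of a matrix `d`. -/
noncomputable def minorsIdeal {R : Type*} [CommRing R] {p q : Type*} [Fintype p] [Fintype q]
    (d : Matrix p q R) (r : ℕ) : Ideal R :=
  Ideal.span { x | ∃ (f : Fin r → p) (g : Fin r → q),
      Function.Injective f ∧ Function.Injective g ∧ x = (d.submatrix f g).det }

/-- The `k`-th Fitting ideal `J_k` of a presentation matrix `d : R^n → R^m`
(so `d` is an `m × n` matrix): the ideal generated by the minors of `d` of size
`m - k + 1`, with the conventions `J_k = 0` for `k ≤ 0` and `J_k = R` for `k > m`. -/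
noncomputable def fittingIdealJ {R : Type*} [CommRing R] {m n : ℕ}
    (d : Matrix (Fin m) (Fin n) R) (k : ℤ) : Ideal R :=
  if k ≤ 0 then ⊥ else if (m : ℤ) < k then ⊤ else minorsIdeal d ((m : ℤ) + 1 - k).toNat

/-- Injectivity of the row and column selections may be dropped: other minors vanish. -/
lemma det_submatrix_mem_minorsIdeal {R : Type*} [CommRing R] {p q ι : Type*} [Fintype p]
    [Fintype q] [Fintype ι] [DecidableEq ι] (A : Matrix p q R) (f : ι → p) (g : ι → q) {r : ℕ}
    (hr : Fintype.card ι = r) : (A.submatrix f g).det ∈ minorsIdeal A r := by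
  by_cases hf : Function.Injective f
  · by_cases hg : Function.Injective g
    · let e : Fin r ≃ ι := (Fintype.equivFinOfCardEq hr).symm
      refine Ideal.subset_span ⟨f ∘ e, g ∘ e, hf.comp e.injective, hg.comp e.injective, ?_⟩
      rw [← Matrix.det_submatrix_equiv_self e, Matrix.submatrix_submatrix]
    · obtain ⟨i, j, hij, hne⟩ := Function.not_injective_iff.1 hg
      rw [Matrix.det_zero_of_column_eq hne (fun k => by simp [hij])]
      exact zero_mem _
  · obtain ⟨i, j, hij, hne⟩ := Function.not_injective_iff.1 hf
    rw [Matrix.det_zero_of_row_eq hne (by ext k; simp [hij])]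
    exact zero_mem _

lemma minorsIdeal_zero {R : Type*} [CommRing R] {p q : Type*} [Fintype p] [Fintype q]
    (A : Matrix p q R) : minorsIdeal A 0 = ⊤ := by
  rw [Ideal.eq_top_iff_one]
  exact Ideal.subset_span ⟨Fin.elim0, Fin.elim0, fun i => i.elim0, fun i => i.elim0, by simp⟩

/-- By multilinearity, a minor of `A * B` is a linear combination of minors of `A` with the same
rows. -/
lemma minorsIdeal_mul_le {R : Type*} [CommRing R] {p q s : Type*} [Fintype p] [Fintype q]
    [Fintype s] (A : Matrix p q R) (B : Matrix q s R) (r : ℕ) :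
    minorsIdeal (A * B) r ≤ minorsIdeal A r := by
  classical
  refine Ideal.span_le.2 ?_
  rintro _ ⟨f, g, -, -, rfl⟩
  have h : ((A * B).submatrix f g)ᵀ = fun j => ∑ k, B k (g j) • fun i => A (f i) k := by
    ext j i
    simp [Matrix.mul_apply, mul_comm]
  have h2 : ((A * B).submatrix f g).det
      = ∑ u : Fin r → q, (∏ j, B (u j) (g j)) * (A.submatrix f u).det := by
    rw [← Matrix.det_transpose, h]
    refine ((Matrix.detRowAlternating (n := Fin r) (R := R)).toMultilinearMap.map_sum
      (fun j k => B k (g j) • fun i => A (f i) k)).trans (Finset.sum_congr rfl fun u _ => ?_)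
    rw [MultilinearMap.map_smul_univ, smul_eq_mul, ← Matrix.det_transpose (A.submatrix f u)]
    rfl
  rw [SetLike.mem_coe, h2]
  exact sum_mem fun u _ => Ideal.mul_mem_left _ _ (det_submatrix_mem_minorsIdeal A f u (by simp))

/-- If all but at most `n` columns of the `t × t` matrix `N` are selections of rows from columns
of `D`, then `det N ∈ I_{t-n}(D)`: expand along the exceptional columns. -/
lemma det_mem_of_bad_columns {R : Type*} [CommRing R] {p q : Type*} [Fintype p] [Fintype q]
    (D : Matrix p q R) (n : ℕ) : ∀ (t : ℕ) (N : Matrix (Fin t) (Fin t) R) (f : Fin t → p)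
    (S : Finset (Fin t)), S.card ≤ n → (∀ j ∉ S, ∃ b, ∀ i, N i j = D (f i) b) →
    N.det ∈ minorsIdeal D (t - n) := by
  classical
  induction n with
  | zero =>
    intro t N f S hS h
    obtain rfl : S = ∅ := by simpa using hS
    choose g hg using fun j => h j (by simp)
    have : N = D.submatrix f g := by ext i j; exact hg j i
    rw [this]
    exact det_submatrix_mem_minorsIdeal D f g (by simp)
  | succ n ih =>
    intro t N f S hS h
    cases t with
    | zero => simp [minorsIdeal_zero]
    | succ t =>
      -- An exceptional column if there is one, and otherwise an arbitrary column.
      obtain ⟨j₀, hj₀⟩ : ∃ j₀, (S.erase j₀).card ≤ n := by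
        rcases S.eq_empty_or_nonempty with rfl | ⟨j, hj⟩
        · exact ⟨0, by simp⟩
        · exact ⟨j, by rw [Finset.card_erase_of_mem hj]; omega⟩
      rw [Matrix.det_succ_column N j₀]
      refine sum_mem fun i _ => Ideal.mul_mem_left _ _ ?_
      rw [Nat.add_sub_add_right]
      refine ih t _ (f ∘ i.succAbove) (Finset.univ.filter fun j => j₀.succAbove j ∈ S) ?_ ?_
      · refine le_trans ?_ hj₀
        refine Finset.card_le_card_of_injOn j₀.succAbove ?_
          Fin.succAbove_right_injective.injOn
        intro j hj
        simpa [Fin.succAbove_ne] using hj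
      · intro j hj
        obtain ⟨b, hb⟩ := h (j₀.succAbove j) (by simpa using hj)
        exact ⟨b, fun i' => hb _⟩

lemma minorsIdeal_antitone {R : Type*} [CommRing R] {p q : Type*} [Fintype p] [Fintype q]
    (A : Matrix p q R) : Antitone (minorsIdeal A) := by
  intro a b hab
  refine Ideal.span_le.2 ?_
  rintro _ ⟨f, g, -, -, rfl⟩
  have := det_mem_of_bad_columns A (b - a) b (A.submatrix f g) f ∅ (by simp)
    (fun j _ => ⟨g j, fun i => rfl⟩)
  rwa [Nat.sub_sub_self hab] at this

lemma minorsIdeal_fromRows_zero_le {R : Type*} [CommRing R] {a p q : Type*} [Fintype a]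
    [Fintype p] [Fintype q] (D : Matrix p q R) (r : ℕ) :
    minorsIdeal (Matrix.fromRows (0 : Matrix a q R) D) r ≤ minorsIdeal D r := by
  refine Ideal.span_le.2 ?_
  rintro _ ⟨f, g, -, -, rfl⟩
  by_cases h : ∃ i x, f i = Sum.inl x
  · obtain ⟨i, x, hx⟩ := h
    rw [Matrix.det_eq_zero_of_row_eq_zero i (fun j => by simp [hx])]
    exact zero_mem _
  · have h' : ∀ i, ∃ y, f i = Sum.inr y := by
      intro i
      rcases hfi : f i with x | y
      · exact (h ⟨i, x, hfi⟩).elim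
      · exact ⟨y, rfl⟩
    choose f' hf' using h'
    have : (Matrix.fromRows (0 : Matrix a q R) D).submatrix f g = D.submatrix f' g := by
      ext i j
      simp [hf']
    rw [this]
    exact det_submatrix_mem_minorsIdeal D f' g (by simp)

/-- A minor of `fromBlocks 1 0 Y D` uses at most `card a` columns of the first block; the remaining
columns come from `D` extended by zero rows. -/
lemma minorsIdeal_fromBlocks_le {R : Type*} [CommRing R] {a p q : Type*} [Fintype a]
    [DecidableEq a] [Fintype p] [Fintype q] (Y : Matrix p a R) (D : Matrix p q R) (t : ℕ) :
    minorsIdeal (Matrix.fromBlocks (1 : Matrix a a R) 0 Y D) t ≤ minorsIdeal D (t - Fintype.card a) := by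
  refine le_trans (Ideal.span_le.2 ?_) (minorsIdeal_fromRows_zero_le (a := a) D _)
  rintro _ ⟨f, g, -, hg, rfl⟩
  refine det_mem_of_bad_columns _ _ t _ f (Finset.univ.filter fun j => (g j).isLeft) ?_ ?_
  · have := Finset.card_le_card_of_injOn (s := Finset.univ.filter fun j => (g j).isLeft)
      (t := Finset.univ.map (Function.Embedding.inl : a ↪ a ⊕ q)) g ?_ hg.injOn
    · simpa using this
    · intro j hj
      obtain ⟨x, hx⟩ := Sum.isLeft_iff.1 (by simpa using hj)
      simp [hx]
  · intro j hj
    rcases hgj : g j with x | y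
    · simp [hgj] at hj
    · refine ⟨y, fun i => ?_⟩
      rcases hfi : f i with x | z <;> simp [hgj, hfi]

/-- A minor of `D` bordered by the full identity block is a minor of `fromBlocks D X 0 1`. -/
lemma minorsIdeal_le_fromBlocks {R : Type*} [CommRing R] {b p q : Type*} [Fintype b]
    [DecidableEq b] [Fintype p] [Fintype q] (D : Matrix p q R) (X : Matrix p b R) (r : ℕ) :
    minorsIdeal D r ≤ minorsIdeal (Matrix.fromBlocks D X 0 (1 : Matrix b b R)) (r + Fintype.card b) := by
  refine Ideal.span_le.2 ?_
  rintro _ ⟨f, g, -, -, rfl⟩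
  have h := det_submatrix_mem_minorsIdeal (Matrix.fromBlocks D X 0 (1 : Matrix b b R))
    (Sum.map f id) (Sum.map g id) (r := r + Fintype.card b) (by simp)
  have h2 : (Matrix.fromBlocks D X 0 (1 : Matrix b b R)).submatrix (Sum.map f id) (Sum.map g id)
      = Matrix.fromBlocks (D.submatrix f g) (X.submatrix f id) 0 1 := by
    ext (i | i) (j | j) <;> simp
  rwa [h2, Matrix.det_fromBlocks_zero₂₁, Matrix.det_one, mul_one] at h

/-- Every linear map from a free module lifts through a surjection from a free module. -/
lemma exists_matrix_lift {R : Type*} [CommRing R] {M : Type*} [AddCommGroup M] [Module R M]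
    {m m' : ℕ} (π : (Fin m → R) →ₗ[R] M) (π' : (Fin m' → R) →ₗ[R] M)
    (hπ' : Function.Surjective π') :
    ∃ Q : Matrix (Fin m') (Fin m) R, ∀ v, π' (Q *ᵥ v) = π v := by
  obtain ⟨h, hh⟩ := Module.projective_lifting_property π' π hπ'
  refine ⟨LinearMap.toMatrix' h, fun v => ?_⟩
  rw [LinearMap.toMatrix'_mulVec, ← hh]
  rfl

lemma exists_matrix_factor {R : Type*} [CommRing R] {M : Type*} [AddCommGroup M] [Module R M]
    {m n l : ℕ} (π : (Fin m → R) →ₗ[R] M) (d : Matrix (Fin m) (Fin n) R)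
    (hker : LinearMap.ker π = LinearMap.range (Matrix.toLin' d))
    (X : Matrix (Fin m) (Fin l) R) (hX : ∀ v, π (X *ᵥ v) = 0) :
    ∃ B : Matrix (Fin n) (Fin l) R, d * B = X := by
  have h : ∀ j, ∃ b, d *ᵥ b = X *ᵥ Pi.single j 1 := by
    intro j
    have : X *ᵥ Pi.single j 1 ∈ LinearMap.range (Matrix.toLin' d) := by
      rw [← hker]; exact hX _
    simpa using this
  choose b hb using h
  refine ⟨Matrix.of fun i j => b j i, ?_⟩
  ext i j
  have := congrFun (hb j) i
  rw [Matrix.mulVec_single_one] at this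
  exact this

lemma minorsIdeal_le_of_presentations
    {R : Type*} [CommRing R] {M : Type*} [AddCommGroup M] [Module R M]
    {n₁ m₁ n₂ m₂ : ℕ}
    (d₁ : Matrix (Fin m₁) (Fin n₁) R) (d₂ : Matrix (Fin m₂) (Fin n₂) R)
    (π₁ : (Fin m₁ → R) →ₗ[R] M) (π₂ : (Fin m₂ → R) →ₗ[R] M)
    (hπ₁ : Function.Surjective π₁) (hπ₂ : Function.Surjective π₂)
    (hker₁ : LinearMap.ker π₁ = LinearMap.range (Matrix.toLin' d₁))
    (hker₂ : LinearMap.ker π₂ = LinearMap.range (Matrix.toLin' d₂)) (c : ℕ) :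
    minorsIdeal d₁ (m₁ - c) ≤ minorsIdeal d₂ (m₂ - c) := by
  obtain ⟨Q, hQ⟩ := exists_matrix_lift π₁ π₂ hπ₂
  obtain ⟨P, hP⟩ := exists_matrix_lift π₂ π₁ hπ₁
  obtain ⟨B₁, hB₁⟩ := exists_matrix_factor π₂ d₂ hker₂ (Q * d₁) (fun v => by
    rw [← Matrix.mulVec_mulVec, hQ, ← LinearMap.mem_ker, hker₁]
    exact ⟨v, by simp⟩)
  obtain ⟨B₂, hB₂⟩ := exists_matrix_factor π₂ d₂ hker₂ (1 - Q * P) (fun v => by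
    rw [Matrix.sub_mulVec, ← Matrix.mulVec_mulVec, map_sub, hQ, hP, Matrix.one_mulVec, sub_self])
  have hE : Matrix.fromBlocks d₁ (-P) 0 1
      = Matrix.fromBlocks 1 0 (-Q) d₂ * Matrix.fromBlocks d₁ (-P) B₁ B₂ := by
    rw [Matrix.fromBlocks_multiply]
    congr 1 <;> simp [hB₁, hB₂]
  calc minorsIdeal d₁ (m₁ - c)
      ≤ minorsIdeal (Matrix.fromBlocks d₁ (-P) 0 1) (m₁ - c + Fintype.card (Fin m₂)) :=
        minorsIdeal_le_fromBlocks _ _ _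
    _ ≤ minorsIdeal (Matrix.fromBlocks d₁ (-P) 0 1) (m₁ + m₂ - c) :=
        minorsIdeal_antitone _ (by simp only [Fintype.card_fin]; omega)
    _ ≤ minorsIdeal (Matrix.fromBlocks 1 0 (-Q) d₂) (m₁ + m₂ - c) := by
        rw [hE]; exact minorsIdeal_mul_le _ _ _
    _ ≤ minorsIdeal d₂ (m₁ + m₂ - c - Fintype.card (Fin m₁)) := minorsIdeal_fromBlocks_le _ _ _
    _ = minorsIdeal d₂ (m₂ - c) := by congr 1; simp only [Fintype.card_fin]; omega

/-- For `k = c + 1 > 0` the case distinction at `k > m` is absorbed by truncated subtraction. -/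
lemma fittingIdealJ_natCast_add_one {R : Type*} [CommRing R] {m n : ℕ}
    (d : Matrix (Fin m) (Fin n) R) (c : ℕ) :
    fittingIdealJ d ((c : ℤ) + 1) = minorsIdeal d (m - c) := by
  rw [fittingIdealJ, if_neg (by omega)]
  split_ifs with h
  · rw [show m - c = 0 by omega, minorsIdeal_zero]
  · congr 1; omega

/-- The Fitting ideal `J_k(M)` depends only on `M` and `k`, and not on the choice of a
free finite presentation `R^n → R^m → M → 0`. -/
theorem fittingIdeal_independent_of_presentation
    {R : Type*} [CommRing R] {M : Type*} [AddCommGroup M] [Module R M]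
    {n₁ m₁ n₂ m₂ : ℕ}
    (d₁ : Matrix (Fin m₁) (Fin n₁) R) (d₂ : Matrix (Fin m₂) (Fin n₂) R)
    (π₁ : (Fin m₁ → R) →ₗ[R] M) (π₂ : (Fin m₂ → R) →ₗ[R] M)
    (hπ₁ : Function.Surjective π₁) (hπ₂ : Function.Surjective π₂)
    (hker₁ : LinearMap.ker π₁ = LinearMap.range (Matrix.toLin' d₁))
    (hker₂ : LinearMap.ker π₂ = LinearMap.range (Matrix.toLin' d₂))
    (k : ℤ) :
    fittingIdealJ d₁ k = fittingIdealJ d₂ k := by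
  by_cases hk : k ≤ 0
  · simp [fittingIdealJ, hk]
  · obtain ⟨c, rfl⟩ : ∃ c : ℕ, k = (c : ℤ) + 1 := ⟨(k - 1).toNat, by omega⟩
    rw [fittingIdealJ_natCast_add_one, fittingIdealJ_natCast_add_one]
    exact le_antisymm
      (minorsIdeal_le_of_presentations d₁ d₂ π₁ π₂ hπ₁ hπ₂ hker₁ hker₂ c)
      (minorsIdeal_le_of_presentations d₂ d₁ π₂ π₁ hπ₂ hπ₁ hker₂ hker₁ c)
end

section
/- Let R be a Noetherian commutative ring and F• an exact bounded complex of finitely generated free R-modules 0 → F^0 → ⋯ → F^n. Then for each i, the depth of the first cohomology jump ideal J^i_1(F•) = I_{rank(F^i)}(d^{i−1} ⊕ d^i) is at least n − i. -/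
/-!
Let `J` be the jump ideal in degree `i`. A regular sequence in `J` is extended one element at a
time. Suppose `x₁, …, x_k ∈ J` is regular with `k < n - i`, and put `I = (x₁, …, x_k)`. Reducing
modulo a nonzerodivisor costs one degree of exactness (`ExactModBelow.sup_span`), so `F / I F` is
exact in degrees below `n - k`, in particular in all degrees up to `i`.

If `J` contains no nonzerodivisor on `R / I`, prime avoidance puts `J` inside an associated prime
`P = (I : s)`. This is impossible (`jumpIdeal_not_le`). Multiplication by `s` embeds `R / P` into
`R / I`, and from this one builds, degree by degree starting at the zero modules in negative
degrees, maps with `d h + h' d = t • 1` for some `t ∉ P` (`homotopy_step`). In degree `i` this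
factors `t • 1` through `d^{i-1} ⊕ d^i`, so by Cauchy–Binet a power of `t` lies in `J`, hence
in `P`, a contradiction.

The homotopies replace localization at `P` and the splitting of the localized complex; no rank or
Auslander–Buchsbaum input is needed. Everything is expressed by congruences between matrices
over `R`.
-/

open Matrix
open scoped Classical

/-- The depth of an ideal `I ⊆ R`: the supremum of lengths of `R`-regular sequences
contained in `I`, with the convention `depth R = ∞`. -/
noncomputable def idealDepth {R : Type*} [CommRing R] (I : Ideal R) : ℕ∞ :=
  if I = ⊤ then ⊤
  else sSup {n : ℕ∞ | ∃ rs : List R, RingTheory.Sequence.IsRegular R rs ∧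
      (∀ x ∈ rs, x ∈ I) ∧ n = rs.length}

/-- Half of the Cauchy–Binet formula: expanding the rows of `L * X` multilinearly writes
`det (L * X)` as a combination of the maximal minors of `X`. -/
lemma det_mul_mem_of_minors_mem {R : Type*} [CommRing R] {p : Type*} [Fintype p] {r : ℕ}
    (J : Ideal R) (L : Matrix (Fin r) p R) (X : Matrix p (Fin r) R)
    (h : ∀ f : Fin r → p, Function.Injective f → (X.submatrix f id).det ∈ J) :
    (L * X).det ∈ J := by
  have key : (L * X).det = ∑ f : Fin r → p, (∏ i, L i (f i)) * (X.submatrix f id).det := by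
    have h1 : (L * X : Matrix _ _ R) = fun i => ∑ k, L i k • X k := by
      ext i j
      simp [Matrix.mul_apply, Finset.sum_apply]
    rw [h1]
    change (Matrix.detRowAlternating (R := R) (n := Fin r)).toMultilinearMap
      (fun i => ∑ k, L i k • X k) = _
    rw [MultilinearMap.map_sum]
    refine Finset.sum_congr rfl fun f _ => ?_
    rw [MultilinearMap.map_smul_univ]
    rfl
  rw [key]
  refine J.sum_mem fun f _ => J.mul_mem_left _ ?_
  by_cases hf : Function.Injective f
  · exact h f hf
  · simp only [Function.Injective, not_forall] at hf
    obtain ⟨a, c, hac, hne⟩ := hf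
    rw [Matrix.det_zero_of_row_eq hne (by ext j; simp [hac])]
    exact J.zero_mem

lemma det_mul_mul_mem_minorsIdeal {R : Type*} [CommRing R] {p q : Type*} [Fintype p] [Fintype q]
    {r : ℕ} (L : Matrix (Fin r) p R) (M : Matrix p q R) (N : Matrix q (Fin r) R) :
    (L * (M * N)).det ∈ minorsIdeal M r := by
  refine det_mul_mem_of_minors_mem _ _ _ fun f hf => ?_
  have : (M * N).submatrix f id = (Nᵀ * (M.submatrix f id)ᵀ)ᵀ := by
    rw [← Matrix.transpose_mul, Matrix.transpose_transpose]
    ext i j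
    simp [Matrix.mul_apply]
  rw [this, Matrix.det_transpose]
  refine det_mul_mem_of_minors_mem _ _ _ fun g hg => ?_
  refine Ideal.subset_span ⟨f, g, hf, hg, ?_⟩
  rw [← Matrix.det_transpose]
  rfl

/-- Noetherian prime avoidance: an ideal `K` without a nonzerodivisor on `R / I` is contained in
an associated prime `P = (I : s)` of `R / I`. -/
lemma exists_regular_or_le_associatedPrime {R : Type*} [CommRing R] [IsNoetherianRing R]
    (K I : Ideal R) :
    (∃ x ∈ K, ∀ a, x * a ∈ I → a ∈ I) ∨
      ∃ P : Ideal R, P.IsPrime ∧ K ≤ P ∧ ∃ s, ∀ a, a ∈ P ↔ a * s ∈ I := by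
  by_cases h : ∃ x ∈ K, ∀ a, x * a ∈ I → a ∈ I
  · exact Or.inl h
  right
  push Not at h
  have hsub : (K : Set R) ⊆ ⋃ P ∈ associatedPrimes R (R ⧸ I), (P : Set R) := by
    rw [biUnion_associatedPrimes_eq_zero_divisors]
    intro x hx
    obtain ⟨a, ha, ha'⟩ := h x hx
    refine ⟨Ideal.Quotient.mk I a, by rwa [Ne, Ideal.Quotient.eq_zero_iff_mem], ?_⟩
    rw [← Ideal.Quotient.mk_eq_mk, ← Submodule.Quotient.mk_smul, Ideal.Quotient.mk_eq_mk,
      Ideal.Quotient.eq_zero_iff_mem]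
    exact ha
  obtain ⟨P, hP, hKP⟩ := (Ideal.subset_union_prime_finite (associatedPrimes.finite R (R ⧸ I))
    (f := id) 0 0 fun _ h _ _ ↦ h.isPrime).1 hsub
  rw [AssociatedPrimes.mem_iff, isAssociatedPrime_iff] at hP
  obtain ⟨hprime, y, hy⟩ := hP
  obtain ⟨s, rfl⟩ := Ideal.Quotient.mk_surjective y
  refine ⟨P, hprime, hKP, s, fun a => ?_⟩
  rw [hy, Submodule.mem_colon_singleton, Submodule.mem_bot, ← Ideal.Quotient.mk_eq_mk,
    ← Submodule.Quotient.mk_smul, Ideal.Quotient.mk_eq_mk, Ideal.Quotient.eq_zero_iff_mem]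
  rfl

/-- Finitely many elements of the fraction field of `R / P` have a common denominator
outside `P`. -/
lemma exists_common_denominator {R : Type*} [CommRing R] (P : Ideal R) [P.IsPrime]
    {ι : Type*} [Finite ι] (f : ι → FractionRing (R ⧸ P)) :
    ∃ c ∉ P, ∃ a : ι → R, ∀ i,
      algebraMap (R ⧸ P) _ (Ideal.Quotient.mk P (a i)) =
        algebraMap (R ⧸ P) _ (Ideal.Quotient.mk P c) * f i := by
  obtain ⟨⟨c, hc⟩, h⟩ := IsLocalization.exist_integer_multiples_of_finite
    (nonZeroDivisors (R ⧸ P)) f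
  obtain ⟨c, rfl⟩ := Ideal.Quotient.mk_surjective c
  choose a ha using h
  choose a' ha' using fun i => Ideal.Quotient.mk_surjective (a i)
  refine ⟨c, ?_, a', fun i => ?_⟩
  · rw [← Ideal.Quotient.eq_zero_iff_mem]
    exact nonZeroDivisors.ne_zero hc
  · rw [ha', ha, Algebra.smul_def]

/-- If `e` vanishes modulo `P` on the kernel of `C` modulo `P`, then `e` factors through `C` over
the residue field at `P`; clearing denominators gives a congruence modulo `P`. -/
lemma exists_factor_mod_prime {R : Type*} [CommRing R] (P : Ideal R) [P.IsPrime]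
    {q r m : Type*} [Fintype q] [Fintype r] [Fintype m]
    (C : Matrix r q R) (e : Matrix m q R)
    (h : ∀ v : q → R, (∀ k, (C *ᵥ v) k ∈ P) → ∀ k, (e *ᵥ v) k ∈ P) :
    ∃ c ∉ P, ∃ g : Matrix m r R, ∀ i j, (c • e - g * C) i j ∈ P := by
  let K := FractionRing (R ⧸ P)
  let φ : R →+* K := (algebraMap (R ⧸ P) K).comp (Ideal.Quotient.mk P)
  have hφ : ∀ a, φ a = 0 ↔ a ∈ P := fun a => by
    simp only [φ, RingHom.comp_apply]
    rw [map_eq_zero_iff _ (IsFractionRing.injective (R ⧸ P) K), Ideal.Quotient.eq_zero_iff_mem]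
  have hker : LinearMap.ker (C.map φ).toLin' ≤ LinearMap.ker (e.map φ).toLin' := by
    intro v hv
    rw [LinearMap.mem_ker, Matrix.toLin'_apply] at hv ⊢
    obtain ⟨c, hc, a, ha⟩ := exists_common_denominator P v
    have ha' : φ ∘ a = φ c • v := funext ha
    have hφc : φ c ≠ 0 := mt (hφ c).1 hc
    have h1 : ∀ k, (C *ᵥ a) k ∈ P := fun k => by
      rw [← hφ, RingHom.map_mulVec, ha', Matrix.mulVec_smul, hv]
      simp
    have h2 : φ c • ((e.map φ) *ᵥ v) = 0 := by
      ext k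
      rw [← Matrix.mulVec_smul, ← ha', ← RingHom.map_mulVec, (hφ _).2 (h a h1 k)]
      rfl
    exact (smul_eq_zero.1 h2).resolve_left hφc
  -- over a field, `e` factors through the range of `C`, and then extends to the whole target
  obtain ⟨G, hG⟩ : ∃ G : (r → K) →ₗ[K] (m → K), G ∘ₗ (C.map φ).toLin' = (e.map φ).toLin' := by
    let E := (LinearMap.ker (C.map φ).toLin').liftQ (e.map φ).toLin' hker
    obtain ⟨G, hG⟩ := LinearMap.exists_extend
      (E ∘ₗ (C.map φ).toLin'.quotKerEquivRange.symm.toLinearMap)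
    refine ⟨G, LinearMap.ext fun v => ?_⟩
    have := LinearMap.congr_fun hG ((C.map φ).toLin'.quotKerEquivRange (Submodule.Quotient.mk v))
    simp only [LinearMap.comp_apply, LinearEquiv.coe_coe, LinearEquiv.symm_apply_apply] at this
    exact this
  obtain ⟨c, hc, a, ha⟩ := exists_common_denominator P
    (fun ij : m × r => LinearMap.toMatrix' G ij.1 ij.2)
  refine ⟨c, hc, Matrix.of fun i j => a (i, j), fun i j => ?_⟩
  have hmat : LinearMap.toMatrix' G * C.map φ = e.map φ := by
    rw [← LinearMap.toMatrix'_toLin' (C.map φ), ← LinearMap.toMatrix'_comp, hG,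
      LinearMap.toMatrix'_toLin']
  rw [← hφ]
  have h3 := congr_fun₂ hmat i j
  simp only [Matrix.mul_apply, Matrix.map_apply] at h3
  simp only [Matrix.sub_apply, Matrix.smul_apply, Matrix.mul_apply, Matrix.of_apply, map_sub,
    map_sum, map_mul, smul_eq_mul, ← h3, Finset.mul_sum]
  rw [sub_eq_zero]
  refine Finset.sum_congr rfl fun k _ => ?_
  rw [show φ (a (i, k)) = φ c * _ from ha (i, k), mul_assoc]

lemma mulVec_mem {R : Type*} [CommRing R] {I : Ideal R} {p q : Type*} [Fintype q]
    (M : Matrix p q R) (v : q → R) (hv : ∀ k, v k ∈ I) (k : p) : (M *ᵥ v) k ∈ I :=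
  I.sum_mem fun j _ => I.mul_mem_left _ (hv j)

/-- One step in building a contracting homotopy away from `P = (I : s)`. Given
`A h + h' B = t` at one spot of the complex and exactness modulo `I` at the next one, a relation
`B k + k' C = t'` with `t' ∉ P` holds there: `e = t - B h'` kills the image of `B`, so modulo `P`
it vanishes on the kernel of `C` and hence factors through `C` up to a denominator. -/
lemma homotopy_step {R : Type*} [CommRing R] {P I : Ideal R} [P.IsPrime] {s : R}
    (hs : ∀ a, a ∈ P ↔ a * s ∈ I) {p q r u : Type*} [Fintype p] [Fintype q] [Fintype r] [Fintype u]
    [DecidableEq q] [DecidableEq r]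
    (A : Matrix q p R) (B : Matrix r q R) (C : Matrix u r R) (hBA : B * A = 0) (hCB : C * B = 0)
    (hex : ∀ v : r → R, (∀ k, (C *ᵥ v) k ∈ I) → ∃ w : q → R, ∀ k, v k - (B *ᵥ w) k ∈ I)
    (hom : ∃ t ∉ P, ∃ (h : Matrix p q R) (h' : Matrix q r R), A * h + h' * B = t • 1) :
    ∃ t ∉ P, ∃ (h : Matrix q r R) (h' : Matrix r u R), B * h + h' * C = t • 1 := by
  obtain ⟨t, ht, h, h', hh⟩ := hom
  set e : Matrix r r R := t • 1 - B * h' with he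
  have heB : e * B = 0 := by
    have h1 : h' * B = t • 1 - A * h := by rw [← hh]; abel
    rw [he, Matrix.sub_mul, Matrix.mul_assoc, h1, Matrix.mul_sub, ← Matrix.mul_assoc B A, hBA]
    simp
  have hCe : C * e = t • C := by
    rw [he, Matrix.mul_sub, ← Matrix.mul_assoc, hCB]
    simp
  obtain ⟨c, hc, g, hg⟩ := exists_factor_mod_prime P C e (by
    intro v hv k
    obtain ⟨w, hw⟩ := hex (s • v) (fun k => by
      rw [Matrix.mulVec_smul, Pi.smul_apply, smul_eq_mul, mul_comm]
      exact (hs _).1 (hv k))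
    rw [hs]
    have h2 : e *ᵥ (fun k => (s • v) k - (B *ᵥ w) k) = s • (e *ᵥ v) := by
      change e *ᵥ (s • v - B *ᵥ w) = _
      rw [Matrix.mulVec_sub, Matrix.mulVec_smul, Matrix.mulVec_mulVec, heB]
      simp
    have h3 : (e *ᵥ (fun k => (s • v) k - (B *ᵥ w) k)) k ∈ I :=
      mulVec_mem _ _ hw k
    rw [h2, Pi.smul_apply, smul_eq_mul, mul_comm] at h3
    exact h3)
  -- `Q` has entries in `P`; right multiplication by `e` turns `c • e = g * C + Q`
  -- into `D * e = t • g * C` with `D` invertible modulo `P`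
  set Q : Matrix r r R := c • e - g * C with hQ
  set D : Matrix r r R := (c * t) • 1 - Q with hD
  have hee : e * e = t • e := by
    conv_lhs => rw [he, Matrix.mul_sub, ← he, ← Matrix.mul_assoc, heB]
    simp
  have hDe : D * e = t • (g * C) := by
    rw [hD, hQ, Matrix.sub_mul, Matrix.sub_mul, Matrix.mul_assoc g, hCe, Matrix.smul_mul,
      Matrix.smul_mul, hee, smul_smul, Matrix.one_mul, Matrix.mul_smul, sub_sub_cancel]
  have hdet : D.det ∉ P := by
    have h4 : (Ideal.Quotient.mk P).mapMatrix D =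
        Ideal.Quotient.mk P (c * t) • (1 : Matrix r r (R ⧸ P)) := by
      ext i j
      simp only [hD, RingHom.mapMatrix_apply, Matrix.map_apply, Matrix.sub_apply,
        Matrix.smul_apply, map_sub, Ideal.Quotient.eq_zero_iff_mem.2 (hg i j), sub_zero,
        smul_eq_mul, map_mul]
      by_cases hij : i = j <;> simp [Matrix.one_apply, hij]
    rw [← Ideal.Quotient.eq_zero_iff_mem, RingHom.map_det, h4, Matrix.det_smul, Matrix.det_one,
      mul_one]
    refine pow_ne_zero _ ?_
    rw [Ne, Ideal.Quotient.eq_zero_iff_mem]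
    exact fun h5 => (Ideal.IsPrime.mem_or_mem ‹_› h5).elim hc ht
  refine ⟨D.det * t, fun h5 => (Ideal.IsPrime.mem_or_mem ‹_› h5).elim hdet ht,
    D.det • h', t • (D.adjugate * g), ?_⟩
  have h6 : D.det • e = t • (D.adjugate * g * C) := by
    have := congrArg (D.adjugate * ·) hDe
    simp only [← Matrix.mul_assoc, Matrix.adjugate_mul, Matrix.mul_smul] at this
    simpa using this
  rw [Matrix.smul_mul, ← h6, he, Matrix.mul_smul, smul_sub, smul_smul]
  abel

/-- `d` is exact modulo `I` in all degrees below `m`: every cycle of `F / I F` in such a degree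
is a boundary. -/
def ExactModBelow {R : Type*} [CommRing R] {b : ℤ → ℕ}
    (d : ∀ i : ℤ, Matrix (Fin (b (i + 1))) (Fin (b i)) R) (I : Ideal R) (m : ℤ) : Prop :=
  ∀ j : ℤ, j + 1 < m → ∀ v : Fin (b (j + 1)) → R, (∀ k, (d (j + 1) *ᵥ v) k ∈ I) →
    ∃ w : Fin (b j) → R, ∀ k, v k - (d j *ᵥ w) k ∈ I

/-- Reducing modulo an element that is regular modulo `I` costs one degree of exactness (long
exact sequence of `0 → F/IF → F/IF → F/(I, x)F → 0`). -/
lemma ExactModBelow.sup_span {R : Type*} [CommRing R] {b : ℤ → ℕ}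
    {d : ∀ i : ℤ, Matrix (Fin (b (i + 1))) (Fin (b i)) R} (hcplx : ∀ i : ℤ, d (i + 1) * d i = 0)
    {I : Ideal R} {m : ℤ} (h : ExactModBelow d I m) {x : R} (hx : ∀ a, x * a ∈ I → a ∈ I) :
    ExactModBelow d (I ⊔ Ideal.span {x}) (m - 1) := by
  intro j hj v hv
  have hsplit : ∀ k, ∃ a, (d (j + 1) *ᵥ v) k - x * a ∈ I := fun k => by
    obtain ⟨c, hc, y, hy, hcy⟩ := Submodule.mem_sup.1 (hv k)
    obtain ⟨a, rfl⟩ := Ideal.mem_span_singleton'.1 hy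
    exact ⟨a, by rw [← hcy, mul_comm x]; simpa using hc⟩
  choose a ha using hsplit
  have hda : ∀ k, (d (j + 1 + 1) *ᵥ a) k ∈ I := fun k => by
    apply hx
    have h1 : (d (j + 1 + 1) *ᵥ (d (j + 1) *ᵥ v - x • a)) k ∈ I :=
      mulVec_mem _ _ ha k
    rw [Matrix.mulVec_sub, Matrix.mulVec_mulVec, hcplx, Matrix.zero_mulVec, zero_sub,
      Matrix.mulVec_smul] at h1
    simpa using h1
  obtain ⟨w, hw⟩ := h (j + 1) (by omega) a hda
  obtain ⟨y, hy⟩ := h j (by omega) (v - x • w) (fun k => by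
    have h2 : (d (j + 1) *ᵥ (v - x • w)) k =
        ((d (j + 1) *ᵥ v) k - x * a k) + x * (a k - (d (j + 1) *ᵥ w) k) := by
      rw [Matrix.mulVec_sub, Matrix.mulVec_smul]
      simp only [Pi.sub_apply, Pi.smul_apply, smul_eq_mul]
      ring
    rw [h2]
    exact I.add_mem (ha k) (I.mul_mem_left _ (hw k)))
  refine ⟨y, fun k => ?_⟩
  have h3 : v k - (d j *ᵥ y) k = ((v - x • w) k - (d j *ᵥ y) k) + w k * x := by
    simp only [Pi.sub_apply, Pi.smul_apply, smul_eq_mul]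
    ring
  rw [h3]
  exact Submodule.add_mem_sup (hy k) (Ideal.mul_mem_left _ _ (Ideal.mem_span_singleton_self x))

/-- An associated prime `P` of `R / I` contains no jump ideal in a degree below which, and at
which, the complex is exact modulo `I`: the homotopy `A h + h' B = t` factors `t • 1` through the
block matrix `A ⊕ B`, so a power of `t` lies in its ideal of maximal minors. -/
lemma jumpIdeal_not_le {R : Type*} [CommRing R] {b : ℤ → ℕ} (hb : ∀ i : ℤ, i < 0 → b i = 0)
    {d : ∀ i : ℤ, Matrix (Fin (b (i + 1))) (Fin (b i)) R} (hcplx : ∀ i : ℤ, d (i + 1) * d i = 0)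
    {P I : Ideal R} [P.IsPrime] {s : R} (hs : ∀ a, a ∈ P ↔ a * s ∈ I) {m : ℤ}
    (h : ExactModBelow d I m) (j : ℤ) (hj : -2 ≤ j) (hjm : j + 1 < m) (i : ℤ) (hi : i = j + 1)
    (hJ : minorsIdeal (Matrix.fromBlocks (d j) 0 0 (d i)) (b i) ≤ P) : False := by
  subst hi
  have hom : ∀ j : ℤ, -2 ≤ j → j + 1 < m → ∃ t ∉ P,
      ∃ (h : Matrix (Fin (b j)) (Fin (b (j + 1))) R)
        (h' : Matrix (Fin (b (j + 1))) (Fin (b (j + 1 + 1))) R),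
        d j * h + h' * d (j + 1) = t • 1 := by
    intro j hj
    induction j, hj using Int.leInduction with
    | base =>
      intro _
      have : IsEmpty (Fin (b (-2 + 1))) := by
        rw [hb _ (by norm_num)]
        infer_instance
      exact ⟨1, (Ideal.ne_top_iff_one P).1 (Ideal.IsPrime.ne_top ‹_›), 0, 0,
        Matrix.ext fun k => isEmptyElim k⟩
    | succ j hj ih =>
      intro hjm
      exact homotopy_step hs (d j) (d (j + 1)) (d (j + 1 + 1)) (hcplx j) (hcplx (j + 1))
        (h (j + 1) hjm) (ih (by omega))
  obtain ⟨t, ht, k, k', hk⟩ := hom j hj hjm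
  have hmem := hJ (det_mul_mul_mem_minorsIdeal (Matrix.fromCols 1 k')
    (Matrix.fromBlocks (d j) 0 0 (d (j + 1))) (Matrix.fromRows k 1))
  rw [Matrix.fromBlocks_mul_fromRows, Matrix.fromCols_mul_fromRows] at hmem
  simp only [Matrix.zero_mul, Matrix.mul_one, Matrix.one_mul, add_zero, zero_add, hk,
    Matrix.det_smul, Matrix.det_one, mul_one] at hmem
  exact ht (Ideal.IsPrime.mem_of_pow_mem ‹_› _ hmem)

lemma isRegular_concat {R : Type*} [CommRing R] {rs : List R}
    (hrs : RingTheory.Sequence.IsRegular R rs) {x : R}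
    (hx : ∀ a, x * a ∈ Ideal.ofList rs → a ∈ Ideal.ofList rs)
    {J : Ideal R} (hJ : J ≠ ⊤) (hmem : ∀ y ∈ rs ++ [x], y ∈ J) :
    RingTheory.Sequence.IsRegular R (rs ++ [x]) := by
  refine ⟨?_, ?_⟩
  · rw [RingTheory.Sequence.isWeaklyRegular_append_iff]
    refine ⟨hrs.toIsWeaklyRegular, ?_⟩
    rw [RingTheory.Sequence.isWeaklyRegular_singleton_iff,
      isSMulRegular_iff_right_eq_zero_of_smul]
    intro y hy
    obtain ⟨a, rfl⟩ := Submodule.Quotient.mk_surjective _ y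
    rw [← Submodule.Quotient.mk_smul, Submodule.Quotient.mk_eq_zero, smul_eq_mul, smul_eq_mul,
      Ideal.mul_top] at hy
    rw [Submodule.Quotient.mk_eq_zero, smul_eq_mul, Ideal.mul_top]
    exact hx a hy
  · rw [smul_eq_mul, Ideal.mul_top]
    intro htop
    refine hJ (top_le_iff.1 ?_)
    rw [htop]
    exact Ideal.span_le.2 hmem

/-- If `0 → F^0 → ⋯ → F^n` is an exact bounded complex of finitely generated free modules
over a Noetherian commutative ring (encoded by ranks `b : ℤ → ℕ` vanishing outside `[0,n]`
and matrices `d i : F^i → F^{i+1}`), then for each `i` the depth of the first cohomology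
jump ideal `J^i_1(F) = I_{rank F^i}(d^{i-1} ⊕ d^i)` is at least `n - i`, where
`d^{i-1} ⊕ d^i : F^{i-1} ⊕ F^i → F^i ⊕ F^{i+1}` is the block-diagonal matrix. -/
theorem depth_cohomology_jump_ideal_of_exact
    {R : Type*} [CommRing R] [IsNoetherianRing R] [Nontrivial R]
    (n : ℕ) (b : ℤ → ℕ) (hb : ∀ i : ℤ, i < 0 ∨ (n : ℤ) < i → b i = 0)
    (d : ∀ i : ℤ, Matrix (Fin (b (i + 1))) (Fin (b i)) R)
    (hcplx : ∀ i : ℤ, d (i + 1) * d i = 0)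
    (hexact : ∀ i : ℤ, i + 1 < (n : ℤ) →
        LinearMap.ker (Matrix.toLin' (d (i + 1))) = LinearMap.range (Matrix.toLin' (d i))) :
    ∀ i : ℕ, ((n : ℤ) - i).toNat ≤
      idealDepth (minorsIdeal (Matrix.fromBlocks (d ((i : ℤ) - 1)) 0 0 (d (i : ℤ))) (b i)) := by
  intro i
  unfold idealDepth
  split_ifs with hJ
  · exact le_top
  set J := minorsIdeal (Matrix.fromBlocks (d ((i : ℤ) - 1)) 0 0 (d (i : ℤ))) (b i) with hJdef
  have main : ∀ k : ℕ, k ≤ ((n : ℤ) - i).toNat → ∃ rs : List R,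
      RingTheory.Sequence.IsRegular R rs ∧ (∀ x ∈ rs, x ∈ J) ∧ rs.length = k ∧
        ExactModBelow d (Ideal.ofList rs) (n - k) := by
    intro k
    induction k with
    | zero =>
      intro _
      refine ⟨[], RingTheory.Sequence.IsRegular.nil R R, by simp, rfl, ?_⟩
      intro j hj v hv
      have hv' : v ∈ LinearMap.ker (Matrix.toLin' (d (j + 1))) := by
        rw [LinearMap.mem_ker, Matrix.toLin'_apply]
        ext k
        simpa using hv k
      rw [hexact j (by simpa using hj)] at hv'
      obtain ⟨w, hw⟩ := hv'
      refine ⟨w, fun k => ?_⟩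
      rw [← Matrix.toLin'_apply, hw, sub_self]
      exact zero_mem _
    | succ k ih =>
      intro hk
      obtain ⟨rs, hreg, hmem, hlen, hex⟩ := ih (by omega)
      rcases exists_regular_or_le_associatedPrime J (Ideal.ofList rs) with
        ⟨x, hxJ, hx⟩ | ⟨P, hP, hJP, s, hs⟩
      · have hmem' : ∀ y ∈ rs ++ [x], y ∈ J := by
          intro y hy
          rcases List.mem_append.1 hy with hy | hy
          · exact hmem y hy
          · rwa [List.mem_singleton.1 hy]
        refine ⟨rs ++ [x], isRegular_concat hreg hx hJ hmem', hmem', by simp [hlen], ?_⟩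
        have := hex.sup_span hcplx hx
        rw [Ideal.ofList_append, Ideal.ofList_singleton]
        rwa [sub_sub] at this
      · exact (jumpIdeal_not_le (fun i hi => hb i (Or.inl hi)) hcplx hs hex ((i : ℤ) - 1)
          (by omega) (by omega) i (by omega) hJP).elim
  obtain ⟨rs, hreg, hmem, hlen, -⟩ := main _ le_rfl
  exact le_sSup ⟨rs, hreg, hmem, by rw [hlen]⟩
end
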